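/- Let β > 0 and let ν be a compactly supported probability measure on ℝ. Let ρ be a compactly supported probability measure on ℝ such that for some ε > 0 and all u ∈ (−ε,ε)∖{0} one has u ∈ D̂_ρ ∩ D̂_ν and R̂_ρ(u) = β/(1−u) + R̂_ν(u) (i.e. ρ is the free additive convolution of the Marchenko–Pastur law of parameter β with ν). Then for every real z < z*_ρ: U_ρ(z) = inf{ β·log(1+g) − βg/(1+g) + ∫ log(λ − z + β/(1+g)) dν(λ) : 0 < g < g*_ρ and z − a_ν < β/(1+g) }. -/

import Mathlib

/-!
Write `G_ρ` for the Stieltjes transform and `h(z) = z - β / (1 + G_ρ(z))` for the subordination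
function. Unfolding the `R`-transform identity at `u = -G_ρ(z)` gives `G_ν(h(z)) = G_ρ(z)` for `z`
near `-∞`, and the formula follows once this holds, with `h(z) < a_ν`, on all of `(-∞, a_ρ)`.

*Global subordination* (`subord_lt`, `Gst_subord`). Both sides are real analytic, so the relation
propagates as long as `h < a_ν`. If `h` reached `a_ν` at some `z₀ < a_ρ`, then, as `h' > 0`, the
function `G_ρ ∘ h⁻¹` would be an analytic continuation of `G_ν` through `a_ν`. This is impossible by
the Vivanti–Pringsheim argument of `not_analyticAt_edge`: the Taylor coefficients of `G_ν` to the
left of `a_ν` are nonnegative moments, too large for such a continuation because `ν` charges every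
neighbourhood of `a_ν`. No complex analysis is needed.

*Variational formula.* The functional `E_z(g)` has derivative
`β (1 + g)⁻² (g - G_ν(z - β / (1 + g)))`. For `g = G_ρ(y)` one has `g = G_ν(y - β / (1 + g))`, so
the derivative has the sign of `y - z`, and `E_z` is minimal at `g = G_ρ(z)` (`Emp_min`). There its
value is `U_ρ(z)` (`Emp_Gst`): both have `z`-derivative `-G_ρ(z)`, and their difference vanishes
at `-∞`.
-/


open MeasureTheory Filter Set

noncomputable section

/-- The topological support of a Borel measure on `ℝ`. -/
def msupp (μ : Measure ℝ) : Set ℝ := {x : ℝ | ∀ U ∈ nhds x, μ U ≠ 0}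

/-- Compact support: some compact set has full measure. -/
def HasCompactSupp (μ : Measure ℝ) : Prop := ∃ K : Set ℝ, IsCompact K ∧ μ K = 1

/-- `a_μ`, the infimum of the support. -/
def aInf (μ : Measure ℝ) : ℝ := sInf (msupp μ)

/-- `b_μ`, the supremum of the support. -/
def bSup (μ : Measure ℝ) : ℝ := sSup (msupp μ)

/-- The (real) Stieltjes transform `G_μ(z) = ∫ (λ - z)⁻¹ dμ(λ)`. -/
def Gst (μ : Measure ℝ) (z : ℝ) : ℝ := ∫ l, (l - z)⁻¹ ∂μ

/-- `G_μ(a_μ) = lim_{z ↑ a_μ} G_μ(z) ∈ (0,∞]`, as the supremum (in `EReal`) of the values of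
`G_μ` on `(-∞, a_μ)` (the two agree since `G_μ` is increasing there). -/
def GaSup (μ : Measure ℝ) : EReal :=
  sSup ((fun z => ((Gst μ z : ℝ) : EReal)) '' Set.Iio (aInf μ))

/-- `G_μ(b_μ) = lim_{z ↓ b_μ} G_μ(z) ∈ [-∞,0)`, as the infimum (in `EReal`) of the values of
`G_μ` on `(b_μ, ∞)` (the two agree since `G_μ` is increasing there). -/
def GbInf (μ : Measure ℝ) : EReal :=
  sInf ((fun z => ((Gst μ z : ℝ) : EReal)) '' Set.Ioi (bSup μ))

/-- The interval `D̂_μ = (-G_μ(a_μ), -G_μ(b_μ)) ⊆ ℝ`. -/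
def Dhat (μ : Measure ℝ) : Set ℝ :=
  {u : ℝ | -(GaSup μ) < (u : EReal) ∧ (u : EReal) < -(GbInf μ)}

/-- The inverse `G_μ^⟨-1⟩` of the restriction of `G_μ` to `ℝ ∖ [a_μ, b_μ]`. -/
def Ginv (μ : Measure ℝ) (g : ℝ) : ℝ :=
  Function.invFunOn (Gst μ) (Set.Iio (aInf μ) ∪ Set.Ioi (bSup μ)) g

/-- The real `R`-transform `R̂_μ(u) = G_μ^⟨-1⟩(-u) - u⁻¹`, meaningful for `u ∈ D̂_μ ∖ {0}`. -/
def Rhat (μ : Measure ℝ) (u : ℝ) : ℝ := Ginv μ (-u) - u⁻¹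

/-- `ρ` is a free additive convolution of `μ` and `ν`. -/
def IsFreeAdd (μ ν ρ : Measure ℝ) : Prop :=
  IsProbabilityMeasure ρ ∧ HasCompactSupp ρ ∧
  ∃ ε > (0 : ℝ), ∀ u : ℝ, u ∈ Set.Ioo (-ε) ε → u ≠ 0 →
    u ∈ Dhat ρ ∧ u ∈ Dhat μ ∧ u ∈ Dhat ν ∧ Rhat ρ u = Rhat μ u + Rhat ν u

/-- `μ` is nondegenerate: not a point mass. -/
def Nondeg (μ : Measure ℝ) : Prop := ¬ ∃ c : ℝ, μ = Measure.dirac c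

/-- The logarithmic potential `U_ρ(z) = ∫ log |z - λ| dρ(λ)`. -/
def Upot (ρ : Measure ℝ) (z : ℝ) : ℝ := ∫ l, Real.log |z - l| ∂ρ

/-- `E_{μ,ν,z}(g) = ∫₀^g s R̂_μ'(-s) ds + ∫ log (λ - z + R̂_μ(-g)) dν(λ)`. -/
def Efun (μ ν : Measure ℝ) (z : ℝ) (g : ℝ) : ℝ :=
  (∫ s in (0:ℝ)..g, s * deriv (Rhat μ) (-s)) + ∫ l, Real.log (l - z + Rhat μ (-g)) ∂ν

/-- The domain `Ê_{μ,ν,z}` of `E_{μ,ν,z}`. -/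
def Ehat (μ ν : Measure ℝ) (z : ℝ) : Set ℝ :=
  {g : ℝ | -g ∈ Dhat μ ∧ g ≠ 0 ∧ z - Rhat μ (-g) < aInf ν}

/-- `F̂_{μ,ν}(h) = R̂_μ(-G_ν(h)) + h`. -/
def Fhat (μ ν : Measure ℝ) (h : ℝ) : ℝ := Rhat μ (-(Gst ν h)) + h

/-- The domain of `F̂_{μ,ν}`. -/
def FhatDom (μ ν : Measure ℝ) : Set ℝ := {h : ℝ | h < aInf ν ∧ -(Gst ν h) ∈ Dhat μ}

/-- `Ĥ_{μ,ν}`: points of the domain to the left of which `F̂_{μ,ν}'` is positive. -/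
def Hhat (μ ν : Measure ℝ) : Set ℝ :=
  {h : ℝ | h ∈ FhatDom μ ν ∧ ∀ t ∈ FhatDom μ ν, t < h → 0 < deriv (Fhat μ ν) t}

/-- `h*_{μ,ν} = sup Ĥ_{μ,ν}`. -/
def hstar (μ ν : Measure ℝ) : ℝ := sSup (Hhat μ ν)

end

/-! ### Support of a compactly supported measure -/

/-- The support lies a.e. between its two edges, and every neighbourhood of the left edge is
charged. -/
lemma ae_support {μ : Measure ℝ} [IsProbabilityMeasure μ] (hc : HasCompactSupp μ) :
    (∀ᵐ l ∂μ, aInf μ ≤ l) ∧ (∀ᵐ l ∂μ, l ≤ bSup μ) ∧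
      ∀ η > 0, 0 < μ (Iio (aInf μ + η)) := by
  obtain ⟨K, hK, hK1⟩ := hc
  have hs : msupp μ = μ.support := by
    ext x
    simp [msupp, Measure.mem_support_iff_forall, pos_iff_ne_zero]
  have hae : ∀ᵐ l ∂μ, l ∈ msupp μ := by
    rw [hs]; exact Measure.support_mem_ae
  have hsub : msupp μ ⊆ K := by
    rw [hs]
    exact Measure.support_subset_of_isClosed hK.isClosed
      ((prob_compl_eq_zero_iff hK.measurableSet).2 hK1)
  have hne : (msupp μ).Nonempty := by
    rw [hs]; exact Measure.nonempty_support (IsProbabilityMeasure.ne_zero μ)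
  have hbb := hK.bddBelow.mono hsub
  have hba := hK.bddAbove.mono hsub
  refine ⟨hae.mono fun l hl => csInf_le hbb hl, hae.mono fun l hl => le_csSup hba hl, ?_⟩
  intro η hη
  have hmem : aInf μ ∈ msupp μ := by
    have hcl : IsClosed (msupp μ) := by rw [hs]; exact Measure.isClosed_support
    exact hcl.csInf_mem hne hbb
  exact pos_iff_ne_zero.2 (hmem _ (Iio_mem_nhds (by linarith)))

/-! ### Stieltjes transform and logarithmic potential left of the support -/

section Stieltjes

variable {μ : Measure ℝ} [IsProbabilityMeasure μ] {a b : ℝ}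

lemma integrable_inv_pow (ha : ∀ᵐ l ∂μ, a ≤ l) {w : ℝ} (hw : w < a) (k : ℕ) :
    Integrable (fun l => ((l - w)⁻¹) ^ k) μ := by
  refine Integrable.of_bound (C := ((a - w)⁻¹) ^ k)
    (by fun_prop) ?_
  filter_upwards [ha] with l hl
  have h1 : 0 < a - w := by linarith
  have h2 : 0 < l - w := by linarith
  rw [Real.norm_of_nonneg (by positivity)]
  gcongr

lemma integrable_inv (ha : ∀ᵐ l ∂μ, a ≤ l) {w : ℝ} (hw : w < a) :
    Integrable (fun l => (l - w)⁻¹) μ := by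
  simpa using integrable_inv_pow ha hw 1

lemma Gst_bounds (ha : ∀ᵐ l ∂μ, a ≤ l) (hb : ∀ᵐ l ∂μ, l ≤ b) {w : ℝ} (hw : w < a) :
    (b - w)⁻¹ ≤ Gst μ w ∧ Gst μ w ≤ (a - w)⁻¹ := by
  have hi := integrable_inv ha hw
  constructor
  · have := integral_mono_ae (integrable_const ((b - w)⁻¹)) hi (by
      filter_upwards [ha, hb] with l hl hl'
      have h2 : 0 < l - w := by linarith
      show (b - w)⁻¹ ≤ (l - w)⁻¹
      gcongr)
    simpa [Gst] using this
  · have := integral_mono_ae hi (integrable_const ((a - w)⁻¹)) (by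
      filter_upwards [ha] with l hl
      have h2 : 0 < a - w := by linarith
      show (l - w)⁻¹ ≤ (a - w)⁻¹
      gcongr)
    simpa [Gst] using this

lemma le_of_ae (ha : ∀ᵐ l ∂μ, a ≤ l) (hb : ∀ᵐ l ∂μ, l ≤ b) : a ≤ b := by
  obtain ⟨l, h1, h2⟩ := (ha.and hb).exists
  exact h1.trans h2

lemma Gst_pos (ha : ∀ᵐ l ∂μ, a ≤ l) (hb : ∀ᵐ l ∂μ, l ≤ b) {w : ℝ} (hw : w < a) :
    0 < Gst μ w := by
  have := le_of_ae ha hb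
  have h : 0 < b - w := by linarith
  exact (inv_pos.2 h).trans_le (Gst_bounds ha hb hw).1

omit [IsProbabilityMeasure μ] in
lemma Gst_nonpos_of_gt (hb : ∀ᵐ l ∂μ, l ≤ b) {w : ℝ} (hw : b < w) : Gst μ w ≤ 0 := by
  refine integral_nonpos_of_ae ?_
  filter_upwards [hb] with l hl
  exact inv_nonpos.2 (by linarith)

lemma Gst_strictMonoOn (ha : ∀ᵐ l ∂μ, a ≤ l) (hb : ∀ᵐ l ∂μ, l ≤ b) :
    StrictMonoOn (Gst μ) (Iio a) := by
  intro w₁ h₁ w₂ h₂ h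
  have h₁ : w₁ < a := h₁
  have h₂ : w₂ < a := h₂
  have hab := le_of_ae ha hb
  have hc : 0 < (w₂ - w₁) * ((b - w₁)⁻¹ * (b - w₂)⁻¹) := by
    have e1 : 0 < w₂ - w₁ := by linarith
    have e2 : 0 < b - w₁ := by linarith
    have e3 : 0 < b - w₂ := by linarith
    positivity
  have := integral_mono_ae (integrable_const ((w₂ - w₁) * ((b - w₁)⁻¹ * (b - w₂)⁻¹)))
    ((integrable_inv ha h₂).sub (integrable_inv ha h₁)) (by
      filter_upwards [ha, hb] with l hl hl'
      have e1 : 0 < l - w₁ := by linarith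
      have e2 : 0 < l - w₂ := by linarith
      have e : (l - w₂)⁻¹ - (l - w₁)⁻¹ = (w₂ - w₁) * ((l - w₁)⁻¹ * (l - w₂)⁻¹) := by
        field_simp; ring
      simp only [Pi.sub_apply]
      rw [e]
      have : 0 ≤ w₂ - w₁ := by linarith
      have e3 : 0 < b - w₂ := by linarith
      gcongr)
  rw [integral_sub' (integrable_inv ha h₂) (integrable_inv ha h₁)] at this
  simp only [integral_const, probReal_univ, one_smul] at this
  unfold Gst
  linarith

/-- Expansion of the Stieltjes transform at a point `w` to the left of the support: its Taylor
coefficients are the moments `∫ (λ - w)⁻⁽ᵏ⁺¹⁾ dμ(λ)`, which are nonnegative. -/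
lemma Gst_hasFPowerSeriesAt (ha : ∀ᵐ l ∂μ, a ≤ l) {w : ℝ} (hw : w < a) :
    HasFPowerSeriesAt (Gst μ)
      (FormalMultilinearSeries.ofScalars ℝ (fun k : ℕ => ∫ l, ((l - w)⁻¹) ^ (k + 1) ∂μ)) w := by
  rw [hasFPowerSeriesAt_iff]
  have hd : 0 < a - w := by linarith
  filter_upwards [Metric.ball_mem_nhds (0 : ℝ) hd] with y hy
  rw [mem_ball_zero_iff] at hy
  have hq : ‖y‖ * (a - w)⁻¹ < 1 := by
    rw [← div_eq_mul_inv, div_lt_one hd]; exact hy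
  have hsum : Summable fun k : ℕ => (a - w)⁻¹ * (‖y‖ * (a - w)⁻¹) ^ k :=
    (summable_geometric_of_lt_one (by positivity) hq).mul_left _
  have key := hasSum_integral_of_dominated_convergence (μ := μ)
    (F := fun (k : ℕ) l => y ^ k * ((l - w)⁻¹) ^ (k + 1)) (f := fun l => (l - (w + y))⁻¹)
    (fun k _ => (a - w)⁻¹ * (‖y‖ * (a - w)⁻¹) ^ k)
    (fun k => by fun_prop) (fun k => by
      filter_upwards [ha] with l hl
      have e2 : 0 < l - w := by linarith
      rw [norm_mul, norm_pow, norm_pow, Real.norm_of_nonneg (inv_nonneg.2 e2.le), mul_pow,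
        ← mul_assoc, mul_comm _ (‖y‖ ^ k), mul_assoc, ← pow_succ']
      gcongr)
    (by filter_upwards with l using hsum) (integrable_const _) (by
      filter_upwards [ha] with l hl
      have e2 : 0 < l - w := by linarith
      have hlt : ‖y * (l - w)⁻¹‖ < 1 := by
        rw [norm_mul, norm_inv, Real.norm_of_nonneg e2.le]
        refine lt_of_le_of_lt ?_ hq
        gcongr
      have h := (hasSum_geometric_of_norm_lt_one hlt).mul_left ((l - w)⁻¹)
      have hne : l - (w + y) ≠ 0 := by
        have := (le_abs_self y).trans_lt hy
        intro h0; linarith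
      convert! h using 1
      · ext k; rw [mul_pow]; ring
      · rw [← mul_inv]; congr 1; field_simp; ring)
  simp only [integral_const_mul] at key
  simpa [FormalMultilinearSeries.coeff_ofScalars, Gst] using key

lemma Gst_analyticOnNhd (ha : ∀ᵐ l ∂μ, a ≤ l) : AnalyticOnNhd ℝ (Gst μ) (Iio a) :=
  fun _ hw => (Gst_hasFPowerSeriesAt ha hw).analyticAt

lemma Gst_deriv_nonneg (ha : ∀ᵐ l ∂μ, a ≤ l) {w : ℝ} (hw : w < a) :
    0 ≤ deriv (Gst μ) w := by
  rw [(Gst_hasFPowerSeriesAt ha hw).deriv]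
  change 0 ≤ FormalMultilinearSeries.coeff _ 1
  rw [FormalMultilinearSeries.coeff_ofScalars]
  exact integral_nonneg fun l => Even.pow_nonneg (by decide) _

/-- Vivanti–Pringsheim phenomenon: a Stieltjes transform cannot be continued analytically along
the real line through the left edge `a` of the support. At `w < a` close to `a` the Taylor
coefficients `cₖ = ∫ (λ - w)⁻⁽ᵏ⁺¹⁾ dμ(λ)` would be bounded by `C s⁻ᵏ` for some `s > a - w`,
whereas the mass near `a` forces `cₖ ≥ m q⁻ᵏ` with `a - w < q < s`. -/
lemma not_analyticAt_edge (ha : ∀ᵐ l ∂μ, a ≤ l) (hpos : ∀ η > 0, 0 < μ (Iio (a + η)))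
    {F : ℝ → ℝ} (hF : AnalyticAt ℝ F a) (hFG : ∀ᶠ w in nhdsWithin a (Iio a), F w = Gst μ w) :
    False := by
  obtain ⟨p, r, hp⟩ := hF
  obtain ⟨R, hR0, hRr⟩ := ENNReal.lt_iff_exists_nnreal_btwn.1 hp.r_pos
  have hR0' : 0 < (R : ℝ) := by exact_mod_cast hR0
  obtain ⟨w, hwev, hwI⟩ : ∃ w, (∀ᶠ x in nhds w, F x = Gst μ x) ∧ w ∈ Ioo (a - R / 4) a := by
    rw [eventually_nhdsWithin_iff] at hFG
    have h1 := hFG.eventually_nhds.filter_mono (nhdsWithin_le_nhds (s := Iio a))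
    have h2 : ∀ᶠ w in nhdsWithin a (Iio a), w ∈ Ioo (a - R / 4) a :=
      Ioo_mem_nhdsLT (by linarith)
    obtain ⟨w, h3, h4⟩ := (h1.and h2).exists
    refine ⟨w, ?_, h4⟩
    filter_upwards [h3, Iio_mem_nhds h4.2] with x hx hx' using hx hx'
  obtain ⟨hw1, hw2⟩ := hwI
  set d := a - w with hd
  have hd0 : 0 < d := by linarith
  have hnorm : ‖w - a‖₊ ≤ R / 4 := by
    rw [← NNReal.coe_le_coe]
    simp only [coe_nnnorm, NNReal.coe_div, NNReal.coe_ofNat, Real.norm_eq_abs]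
    rw [abs_of_neg (by linarith)]; linarith
  have hlt : (‖w - a‖₊ : ENNReal) < r := by
    refine lt_of_le_of_lt ?_ hRr
    exact_mod_cast hnorm.trans (by rw [← NNReal.coe_le_coe]; push_cast; linarith)
  have hq := hp.changeOrigin hlt
  rw [add_sub_cancel] at hq
  have heq := (hq.hasFPowerSeriesAt.congr hwev).eq_formalMultilinearSeries
    (Gst_hasFPowerSeriesAt ha hw2)
  rw [heq] at hq
  have hrad : ((R / 2 : NNReal) : ENNReal) <
      (FormalMultilinearSeries.ofScalars ℝ
        (fun k : ℕ => ∫ l, ((l - w)⁻¹) ^ (k + 1) ∂μ)).radius := by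
    refine lt_of_lt_of_le ?_ hq.r_le
    rw [lt_tsub_iff_right]
    refine lt_of_le_of_lt ?_ hRr
    exact_mod_cast (add_le_add_right hnorm (R / 2)).trans
      (by rw [← NNReal.coe_le_coe]; push_cast; linarith)
  obtain ⟨C, hC0, hC⟩ := FormalMultilinearSeries.norm_mul_pow_le_of_lt_radius _ hrad
  have hC' : ∀ k : ℕ, (∫ l, ((l - w)⁻¹) ^ (k + 1) ∂μ) * (R / 2 : ℝ) ^ k ≤ C := by
    intro k
    refine le_trans ?_ (hC k)
    rw [FormalMultilinearSeries.ofScalars_norm]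
    push_cast
    gcongr
    exact le_abs_self _
  -- the points of `(-∞, a + η)` are within `q = 3R/8` of `w`, where `d < q < R / 2`
  set η : ℝ := 3 * R / 8 - d with hη
  have hη0 : 0 < η := by linarith
  have hm : 0 < μ.real (Iio (a + η)) :=
    ENNReal.toReal_pos (hpos η hη0).ne' (measure_ne_top _ _)
  have hlow : ∀ k : ℕ, μ.real (Iio (a + η)) * ((3 * R / 8 : ℝ)⁻¹) ^ (k + 1) ≤
      ∫ l, ((l - w)⁻¹) ^ (k + 1) ∂μ := by
    intro k
    have := integral_mono_ae
      ((integrable_const (((3 * R / 8 : ℝ)⁻¹) ^ (k + 1))).indicator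
        (measurableSet_Iio (a := a + η)))
      (integrable_inv_pow ha hw2 (k + 1)) (by
        filter_upwards [ha] with l hl
        have e2 : 0 < l - w := by linarith
        by_cases hl' : l ∈ Iio (a + η)
        · rw [indicator_of_mem hl']
          have hl'' : l < a + η := hl'
          have : l - w ≤ 3 * R / 8 := by linarith
          gcongr
        · rw [indicator_of_notMem hl']
          positivity)
    rw [integral_indicator_const _ measurableSet_Iio, smul_eq_mul] at this
    exact this
  obtain ⟨n, hn⟩ := pow_unbounded_of_one_lt
    (C * (3 * R / 8) / μ.real (Iio (a + η))) (show (1 : ℝ) < 4 / 3 by norm_num)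
  have h1 : μ.real (Iio (a + η)) * ((3 * R / 8 : ℝ)⁻¹) ^ (n + 1) * (R / 2 : ℝ) ^ n ≤ C :=
    (mul_le_mul_of_nonneg_right (hlow n) (by positivity)).trans (hC' n)
  have h2 : ((3 * R / 8 : ℝ)⁻¹) ^ (n + 1) * (R / 2 : ℝ) ^ n =
      (4 / 3 : ℝ) ^ n * (3 * R / 8 : ℝ)⁻¹ := by
    rw [pow_succ, mul_right_comm, ← mul_pow]
    congr 2
    field_simp; norm_num
  rw [mul_assoc, h2] at h1
  rw [div_lt_iff₀ hm] at hn
  have h3 : μ.real (Iio (a + η)) * ((4 / 3 : ℝ) ^ n * (3 * R / 8 : ℝ)⁻¹) * (3 * R / 8) =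
      (4 / 3 : ℝ) ^ n * μ.real (Iio (a + η)) := by
    field_simp
  have h4 := mul_le_mul_of_nonneg_right h1 (show (0 : ℝ) ≤ 3 * R / 8 by positivity)
  rw [h3] at h4
  linarith

lemma Gst_tendsto_atBot (ha : ∀ᵐ l ∂μ, a ≤ l) (hb : ∀ᵐ l ∂μ, l ≤ b) :
    Tendsto (Gst μ) atBot (nhds 0) := by
  have h : Tendsto (fun w : ℝ => (a - w)⁻¹) atBot (nhds 0) :=
    tendsto_inv_atTop_zero.comp (tendsto_atTop_add_const_left _ a tendsto_neg_atBot_atTop)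
  refine tendsto_of_tendsto_of_tendsto_of_le_of_le' tendsto_const_nhds h ?_ ?_
  · filter_upwards [Iio_mem_atBot a] with w hw using (Gst_pos ha hb hw).le
  · filter_upwards [Iio_mem_atBot a] with w hw using (Gst_bounds ha hb hw).2

/-- `∫ log (λ - w) dμ(λ)`, the logarithmic potential of `μ` at a point `w` to the left of the
support. -/
noncomputable def leftPot (μ : Measure ℝ) (w : ℝ) : ℝ := ∫ l, Real.log (l - w) ∂μ

lemma integrable_log (ha : ∀ᵐ l ∂μ, a ≤ l) (hb : ∀ᵐ l ∂μ, l ≤ b) {w : ℝ} (hw : w < a) :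
    Integrable (fun l => Real.log (l - w)) μ := by
  refine Integrable.of_bound (C := max |Real.log (a - w)| |Real.log (b - w)|)
    (Measurable.aestronglyMeasurable (by fun_prop)) ?_
  filter_upwards [ha, hb] with l hl hl'
  have h1 : 0 < a - w := by linarith
  have h2 : 0 < l - w := by linarith
  exact abs_le_max_abs_abs (Real.log_le_log h1 (by linarith)) (Real.log_le_log h2 (by linarith))

lemma leftPot_bounds (ha : ∀ᵐ l ∂μ, a ≤ l) (hb : ∀ᵐ l ∂μ, l ≤ b) {w : ℝ} (hw : w < a) :
    Real.log (a - w) ≤ leftPot μ w ∧ leftPot μ w ≤ Real.log (b - w) := by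
  have hi := integrable_log ha hb hw
  constructor
  · have := integral_mono_ae (integrable_const (Real.log (a - w))) hi (by
      filter_upwards [ha] with l hl
      exact Real.log_le_log (by linarith) (by linarith))
    simpa [leftPot] using this
  · have := integral_mono_ae hi (integrable_const (Real.log (b - w))) (by
      filter_upwards [ha, hb] with l hl hl'
      exact Real.log_le_log (by linarith) (by linarith))
    simpa [leftPot] using this

lemma leftPot_hasDerivAt (ha : ∀ᵐ l ∂μ, a ≤ l) (hb : ∀ᵐ l ∂μ, l ≤ b) {w : ℝ} (hw : w < a) :
    HasDerivAt (leftPot μ) (-Gst μ w) w := by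
  have hd : 0 < (a - w) / 2 := by linarith
  have := (hasDerivAt_integral_of_dominated_loc_of_deriv_le (μ := μ)
    (F := fun x l => Real.log (l - x)) (F' := fun x l => -(l - x)⁻¹)
    (bound := fun _ => ((a - w) / 2)⁻¹) (Metric.ball_mem_nhds w hd)
    (Eventually.of_forall fun x => Measurable.aestronglyMeasurable (by fun_prop))
    (integrable_log ha hb hw)
    (Measurable.aestronglyMeasurable (by fun_prop))
    (by
      filter_upwards [ha] with l hl x hx
      rw [Metric.mem_ball, Real.dist_eq] at hx
      have := (abs_lt.1 hx).2
      have h2 : (a - w) / 2 ≤ l - x := by linarith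
      rw [norm_neg, norm_inv, Real.norm_of_nonneg (by linarith)]
      gcongr)
    (integrable_const _)
    (by
      filter_upwards [ha] with l hl x hx
      rw [Metric.mem_ball, Real.dist_eq] at hx
      have := (abs_lt.1 hx).2
      have h2 : l - x ≠ 0 := by intro h0; linarith
      have := ((hasDerivAt_id x).const_sub l).log h2
      simpa [neg_div] using this)).2
  rw [integral_neg] at this
  exact this

lemma Upot_eq_leftPot (ρ : Measure ℝ) (z : ℝ) : Upot ρ z = leftPot ρ z := by
  unfold Upot leftPot
  congr 1
  ext l
  rw [Real.log_abs, ← Real.log_neg_eq_log, neg_sub]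

lemma tendsto_log_sub_log (c d : ℝ) :
    Tendsto (fun z : ℝ => Real.log (c - z) - Real.log (d - z)) atBot (nhds 0) := by
  have h0 : Tendsto (fun z : ℝ => d - z) atBot atTop :=
    tendsto_atTop_add_const_left _ d tendsto_neg_atBot_atTop
  have h1 : Tendsto (fun z : ℝ => 1 + (c - d) * (d - z)⁻¹) atBot (nhds 1) := by
    simpa using ((tendsto_inv_atTop_zero.comp h0).const_mul (c - d)).const_add 1
  have h2 := (Real.continuousAt_log one_ne_zero).tendsto.comp h1
  rw [Real.log_one] at h2
  refine h2.congr' ?_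
  filter_upwards [Iio_mem_atBot c, Iio_mem_atBot d] with z hc hd
  have hc : z < c := hc
  have hd : z < d := hd
  have e1 : c - z ≠ 0 := by intro h; linarith
  have e2 : d - z ≠ 0 := by intro h; linarith
  rw [← Real.log_div e1 e2]
  simp only [Function.comp]
  congr 1
  field_simp; ring

end Stieltjes

/-! ### Inverting the Stieltjes transform -/

section Inverse

variable {μ : Measure ℝ} [IsProbabilityMeasure μ]

omit [IsProbabilityMeasure μ] in
lemma lt_GaSup_iff {g : ℝ} : (g : EReal) < GaSup μ ↔ ∃ y < aInf μ, g < Gst μ y := by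
  simp [GaSup, lt_sSup_iff]

/-- `G_μ` maps `(-∞, a_μ)` onto `(0, G_μ(a_μ))`. -/
lemma exists_Gst_eq (hc : HasCompactSupp μ) {g : ℝ} (hg : 0 < g) (hg' : (g : EReal) < GaSup μ) :
    ∃ y < aInf μ, Gst μ y = g := by
  obtain ⟨ha, hb, -⟩ := ae_support hc
  obtain ⟨y₁, hy₁, h₁⟩ := lt_GaSup_iff.1 hg'
  obtain ⟨y₀, h₀, hy₀⟩ := (((Gst_tendsto_atBot ha hb).eventually (gt_mem_nhds hg)).and
    (Iic_mem_atBot y₁)).exists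
  obtain ⟨y, hy, rfl⟩ := intermediate_value_Icc hy₀
    ((Gst_analyticOnNhd ha).continuousOn.mono fun x hx => hx.2.trans_lt hy₁) ⟨h₀.le, h₁.le⟩
  exact ⟨y, hy.2.trans_lt hy₁, rfl⟩

/-- `G_μ` is injective on `(-∞, a_μ)` and nonpositive on `(b_μ, ∞)`, so the preimage chosen by
`Ginv` is the one to the left of the support. -/
lemma Ginv_Gst (hc : HasCompactSupp μ) {y : ℝ} (hy : y < aInf μ) : Ginv μ (Gst μ y) = y := by
  obtain ⟨ha, hb, -⟩ := ae_support hc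
  have hex : ∃ x ∈ Iio (aInf μ) ∪ Ioi (bSup μ), Gst μ x = Gst μ y := ⟨y, Or.inl hy, rfl⟩
  have hmem := Function.invFunOn_mem hex
  have heq := Function.invFunOn_eq hex
  change Ginv μ (Gst μ y) ∈ _ at hmem
  change Gst μ (Ginv μ (Gst μ y)) = _ at heq
  rcases hmem with h | h
  · exact (Gst_strictMonoOn ha hb).injOn h hy heq
  · have := Gst_nonpos_of_gt hb h
    have := Gst_pos ha hb hy
    linarith

end Inverse

/-! ### The subordination relation -/

section Subordination

variable {β : ℝ} {ν ρ : Measure ℝ} [IsProbabilityMeasure ν] [IsProbabilityMeasure ρ]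

/-- The subordination function `h(z) = z - β / (1 + G_ρ(z))`, for which
`G_ρ(z) = G_ν(h(z))` when `ρ = μ_{MP,β} ⊞ ν`. -/
noncomputable def subord (β : ℝ) (ρ : Measure ℝ) (z : ℝ) : ℝ := z - β / (1 + Gst ρ z)

lemma subord_strictMonoOn (hβ : 0 < β) (hc : HasCompactSupp ρ) :
    StrictMonoOn (subord β ρ) (Iio (aInf ρ)) := by
  obtain ⟨ha, hb, -⟩ := ae_support hc
  intro z₁ h₁ z₂ h₂ h
  have hG := Gst_strictMonoOn ha hb h₁ h₂ h
  have hp := Gst_pos ha hb h₁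
  have : β / (1 + Gst ρ z₂) ≤ β / (1 + Gst ρ z₁) := by gcongr
  unfold subord
  linarith

lemma subord_analyticOnNhd (hc : HasCompactSupp ρ) :
    AnalyticOnNhd ℝ (subord β ρ) (Iio (aInf ρ)) := by
  obtain ⟨ha, hb, -⟩ := ae_support hc
  intro z hz
  have hp := Gst_pos ha hb hz
  exact analyticAt_id.sub (analyticAt_const.div
    (analyticAt_const.add (Gst_analyticOnNhd ha z hz)) (by linarith))

lemma subord_hasDerivAt (hc : HasCompactSupp ρ) {z : ℝ} (hz : z < aInf ρ) :
    HasDerivAt (subord β ρ)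
      (1 + β * deriv (Gst ρ) z / (1 + Gst ρ z) ^ 2) z := by
  obtain ⟨ha, hb, -⟩ := ae_support hc
  have hp := Gst_pos ha hb hz
  have hG := (Gst_analyticOnNhd ha z hz).differentiableAt.hasDerivAt
  convert! (hasDerivAt_id z).sub ((hasDerivAt_const z β).div (hG.const_add 1) (by linarith)) using 1
  ring

lemma subord_bounds (hβ : 0 < β) (hc : HasCompactSupp ρ) {z : ℝ} (hz : z < aInf ρ) :
    z - β ≤ subord β ρ z ∧ subord β ρ z ≤ z := by
  obtain ⟨ha, hb, -⟩ := ae_support hc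
  have hp := Gst_pos ha hb hz
  have h1 : 0 ≤ β / (1 + Gst ρ z) := by positivity
  have h2 : β / (1 + Gst ρ z) ≤ β := div_le_self hβ.le (by linarith)
  unfold subord
  constructor <;> linarith

/-- Near `-∞` the additivity of `R`-transforms is the subordination relation. -/
lemma subord_near_atBot (hcν : HasCompactSupp ν) (hcρ : HasCompactSupp ρ)
    (hR : ∃ ε > (0 : ℝ), ∀ u : ℝ, u ∈ Set.Ioo (-ε) ε → u ≠ 0 →
      u ∈ Dhat ρ ∧ u ∈ Dhat ν ∧ Rhat ρ u = β / (1 - u) + Rhat ν u) :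
    ∃ M ≤ aInf ρ, ∀ z < M,
      subord β ρ z < aInf ν ∧ Gst ν (subord β ρ z) = Gst ρ z := by
  obtain ⟨ε, hε, hR⟩ := hR
  obtain ⟨ha, hb, -⟩ := ae_support hcρ
  obtain ⟨M, hM⟩ := eventually_atBot.1 ((Gst_tendsto_atBot ha hb).eventually (gt_mem_nhds hε))
  refine ⟨min M (aInf ρ), min_le_right _ _, fun z hz => ?_⟩
  have hzM : z < M := hz.trans_le (min_le_left _ _)
  have hza : z < aInf ρ := hz.trans_le (min_le_right _ _)
  have hg0 := Gst_pos ha hb hza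
  have hgε := hM z hzM.le
  obtain ⟨-, hDν, hRz⟩ := hR (-Gst ρ z) ⟨by linarith, by linarith⟩ (by linarith)
  have hlt : ((Gst ρ z : ℝ) : EReal) < GaSup ν := by
    have := hDν.1
    rw [EReal.coe_neg] at this
    exact EReal.neg_lt_neg_iff.1 this
  obtain ⟨y, hy, hyz⟩ := exists_Gst_eq hcν hg0 hlt
  have e1 := Ginv_Gst hcρ hza
  have e2 := Ginv_Gst hcν hy
  rw [hyz] at e2
  simp only [Rhat, neg_neg, e1, e2, sub_neg_eq_add] at hRz
  have : subord β ρ z = y := by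
    unfold subord; linarith
  rw [this]
  exact ⟨hy, hyz⟩

/-- The relation `G_ν ∘ h = G_ρ` propagates along the part of `(-∞, a_ρ)` that `h` maps to the
left of the support of `ν`. -/
lemma Gst_subord_of_lt (hβ : 0 < β) (hcν : HasCompactSupp ν) (hcρ : HasCompactSupp ρ)
    (hR : ∃ ε > (0 : ℝ), ∀ u : ℝ, u ∈ Set.Ioo (-ε) ε → u ≠ 0 →
      u ∈ Dhat ρ ∧ u ∈ Dhat ν ∧ Rhat ρ u = β / (1 - u) + Rhat ν u)
    {z : ℝ} (hz : z < aInf ρ) (hh : subord β ρ z < aInf ν) :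
    Gst ν (subord β ρ z) = Gst ρ z := by
  obtain ⟨M, hM, hMz⟩ := subord_near_atBot hcν hcρ hR
  have hmono := subord_strictMonoOn hβ hcρ
  have hI : ∀ x ∈ Iic z, x < aInf ρ := fun x hx => lt_of_le_of_lt hx hz
  have hmaps : ∀ x ∈ Iic z, subord β ρ x < aInf ν := fun x hx =>
    (hmono.monotoneOn (hI x hx) hz hx).trans_lt hh
  have h1 : AnalyticOnNhd ℝ (fun x => Gst ν (subord β ρ x)) (Iic z) := fun x hx =>
    (Gst_analyticOnNhd (ae_support hcν).1 _ (hmaps x hx)).comp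
      (subord_analyticOnNhd hcρ x (hI x hx))
  have h2 : AnalyticOnNhd ℝ (Gst ρ) (Iic z) :=
    (Gst_analyticOnNhd (ae_support hcρ).1).mono hI
  obtain ⟨x₀, hx₀z, hx₀M⟩ := Filter.nonempty_of_mem
    (inter_mem (Iic_mem_atBot z) (Iio_mem_atBot M))
  refine h1.eqOn_of_preconnected_of_eventuallyEq h2 isPreconnected_Iic hx₀z ?_
    (mem_Iic.2 le_rfl)
  filter_upwards [Iio_mem_nhds hx₀M] with x hx using (hMz x hx).2

/-- The subordination function maps `(-∞, a_ρ)` to the left of the support of `ν`. If it reached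
`a_ν` at some `z₀ < a_ρ`, then `G_ρ ∘ h⁻¹` would continue `G_ν` analytically through `a_ν`. -/
lemma subord_lt (hβ : 0 < β) (hcν : HasCompactSupp ν) (hcρ : HasCompactSupp ρ)
    (hR : ∃ ε > (0 : ℝ), ∀ u : ℝ, u ∈ Set.Ioo (-ε) ε → u ≠ 0 →
      u ∈ Dhat ρ ∧ u ∈ Dhat ν ∧ Rhat ρ u = β / (1 - u) + Rhat ν u)
    {z : ℝ} (hz : z < aInf ρ) : subord β ρ z < aInf ν := by
  by_contra! hcon
  obtain ⟨ha, hb, -⟩ := ae_support hcρ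
  obtain ⟨haν, hbν, hpos⟩ := ae_support hcν
  obtain ⟨y, hyz, hyν⟩ := Filter.nonempty_of_mem
    (inter_mem (Iic_mem_atBot z) (Iio_mem_atBot (aInf ν)))
  have hyν : y < aInf ν := hyν
  have hy : subord β ρ y ≤ aInf ν :=
    (subord_bounds hβ hcρ (lt_of_le_of_lt hyz hz)).2.trans hyν.le
  obtain ⟨z₀, hz₀, hz₀ν⟩ := intermediate_value_Icc hyz
    ((subord_analyticOnNhd (β := β) hcρ).continuousOn.mono
      fun x hx => lt_of_le_of_lt hx.2 hz) ⟨hy, hcon⟩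
  have hz₀a : z₀ < aInf ρ := lt_of_le_of_lt hz₀.2 hz
  have han := subord_analyticOnNhd (β := β) hcρ z₀ hz₀a
  have hder : deriv (subord β ρ) z₀ ≠ 0 := by
    rw [(subord_hasDerivAt hcρ hz₀a).deriv]
    have h1 := Gst_deriv_nonneg ha hz₀a
    have h2 := Gst_pos ha hb hz₀a
    positivity
  have hinv := han.analyticAt_localInverse hder
  set φ := han.hasStrictDerivAt.localInverse _ _ _ hder with hφ
  have hφ0 : φ (subord β ρ z₀) = z₀ :=
    HasStrictFDerivAt.localInverse_apply_image _
  have hright : ∀ᶠ w in nhds (subord β ρ z₀), subord β ρ (φ w) = w :=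
    HasStrictFDerivAt.eventually_right_inverse _
  rw [hz₀ν] at hφ0 hright hinv
  have hF : AnalyticAt ℝ (fun w => Gst ρ (φ w)) (aInf ν) :=
    AnalyticAt.fun_comp (by rw [hφ0]; exact Gst_analyticOnNhd ha z₀ hz₀a) hinv
  refine not_analyticAt_edge haν hpos hF ?_
  have hnear : ∀ᶠ w in nhds (aInf ν), φ w < aInf ρ :=
    hinv.continuousAt.eventually (by rw [hφ0]; exact Iio_mem_nhds hz₀a)
  rw [eventually_nhdsWithin_iff]
  filter_upwards [hright, hnear] with w h1 h2 h3
  have := Gst_subord_of_lt hβ hcν hcρ hR h2 (by rw [h1]; exact h3)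
  rw [← this, h1]

lemma Gst_subord (hβ : 0 < β) (hcν : HasCompactSupp ν) (hcρ : HasCompactSupp ρ)
    (hR : ∃ ε > (0 : ℝ), ∀ u : ℝ, u ∈ Set.Ioo (-ε) ε → u ≠ 0 →
      u ∈ Dhat ρ ∧ u ∈ Dhat ν ∧ Rhat ρ u = β / (1 - u) + Rhat ν u)
    {z : ℝ} (hz : z < aInf ρ) : Gst ν (subord β ρ z) = Gst ρ z :=
  Gst_subord_of_lt hβ hcν hcρ hR hz (subord_lt hβ hcν hcρ hR hz)

end Subordination

/-! ### The variational formula -/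

section Variational

variable {β : ℝ} {ν ρ : Measure ℝ} [IsProbabilityMeasure ν] [IsProbabilityMeasure ρ]

/-- The functional `E_z(g)` minimized in the variational formula, with `w = z - β / (1 + g)` as
the argument of the logarithmic potential of `ν`. -/
noncomputable def Emp (β : ℝ) (ν : Measure ℝ) (z g : ℝ) : ℝ :=
  β * Real.log (1 + g) - β * g / (1 + g) + leftPot ν (z - β / (1 + g))

lemma mpTerm_hasDerivAt (β : ℝ) {g : ℝ} (hg : 0 < g) :
    HasDerivAt (fun g => β * Real.log (1 + g) - β * g / (1 + g)) (β * g / (1 + g) ^ 2) g := by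
  have h1 : (1 + g) ≠ 0 := by positivity
  have e := (hasDerivAt_id g).const_add 1
  have := ((e.log h1).const_mul β).sub (((hasDerivAt_id g).const_mul β).div e h1)
  convert! this using 1
  simp only [id]
  field_simp
  ring

lemma Emp_hasDerivAt (hcν : HasCompactSupp ν) {z g : ℝ} (hg : 0 < g)
    (hzg : z - β / (1 + g) < aInf ν) :
    HasDerivAt (Emp β ν z) (β / (1 + g) ^ 2 * (g - Gst ν (z - β / (1 + g)))) g := by
  obtain ⟨ha, hb, -⟩ := ae_support hcν
  have h1 : (1 + g) ≠ 0 := by positivity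
  have e := (hasDerivAt_id g).const_add 1
  have hw : HasDerivAt (fun g => z - β / (1 + g)) (β / (1 + g) ^ 2) g := by
    convert! ((hasDerivAt_const g β).div e h1).const_sub z using 1
    simp only [id]; ring
  convert! (mpTerm_hasDerivAt β hg).add
    (HasDerivAt.comp g (leftPot_hasDerivAt ha hb hzg) hw) using 1
  ring

/-- At the critical point `g = G_ρ(z)` the functional equals the logarithmic potential of `ρ`:
both have derivative `-G_ρ(z)` in `z`, and their difference tends to `0` at `-∞`. -/
lemma Emp_Gst (hβ : 0 < β) (hcν : HasCompactSupp ν) (hcρ : HasCompactSupp ρ)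
    (hR : ∃ ε > (0 : ℝ), ∀ u : ℝ, u ∈ Set.Ioo (-ε) ε → u ≠ 0 →
      u ∈ Dhat ρ ∧ u ∈ Dhat ν ∧ Rhat ρ u = β / (1 - u) + Rhat ν u)
    {z : ℝ} (hz : z < aInf ρ) : Emp β ν z (Gst ρ z) = leftPot ρ z := by
  obtain ⟨ha, hb, -⟩ := ae_support hcρ
  obtain ⟨haν, hbν, -⟩ := ae_support hcν
  set D : ℝ → ℝ := fun z => Emp β ν z (Gst ρ z) - leftPot ρ z with hD
  have hder : ∀ x < aInf ρ, HasDerivAt D 0 x := by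
    intro x hx
    have hp := Gst_pos ha hb hx
    have hG := (Gst_analyticOnNhd ha x hx).differentiableAt.hasDerivAt
    have h1 := HasDerivAt.comp x (mpTerm_hasDerivAt β hp) hG
    have h2 := HasDerivAt.comp x (leftPot_hasDerivAt haν hbν (subord_lt hβ hcν hcρ hR hx))
      (subord_hasDerivAt hcρ hx)
    convert! (h1.add h2).sub (leftPot_hasDerivAt ha hb hx) using 1
    rw [Gst_subord hβ hcν hcρ hR hx]
    have : 1 + Gst ρ x ≠ 0 := by positivity
    field_simp
    ring
  have hconst : ∀ x < aInf ρ, D x = D z := by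
    intro x hx
    refine (convex_Iio (aInf ρ)).is_const_of_fderivWithin_eq_zero (𝕜 := ℝ)
      (fun y hy => (hder y hy).differentiableAt.differentiableWithinAt) (fun y hy => ?_) hx hz
    rw [fderivWithin_of_isOpen isOpen_Iio hy, (hder y hy).hasFDerivAt.fderiv]
    ext; simp
  have hG0 := Gst_tendsto_atBot ha hb
  have hmp : Tendsto (fun x => β * Real.log (1 + Gst ρ x) - β * Gst ρ x / (1 + Gst ρ x))
      atBot (nhds 0) := by
    have h1 : Tendsto (fun x => 1 + Gst ρ x) atBot (nhds 1) := by
      simpa using hG0.const_add 1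
    simpa using ((h1.log one_ne_zero).const_mul β).sub
      ((hG0.const_mul β).div h1 one_ne_zero)
  have hpot : Tendsto (fun x => leftPot ν (subord β ρ x) - leftPot ρ x) atBot (nhds 0) := by
    refine tendsto_of_tendsto_of_tendsto_of_le_of_le'
      (tendsto_log_sub_log (aInf ν) (bSup ρ)) (tendsto_log_sub_log (bSup ν + β) (aInf ρ)) ?_ ?_
    · filter_upwards [Iio_mem_atBot (aInf ρ), Iio_mem_atBot (aInf ν)] with x hx hx'
      have hx : x < aInf ρ := hx
      have hx' : x < aInf ν := hx'
      have h1 := (leftPot_bounds haν hbν (subord_lt hβ hcν hcρ hR hx)).1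
      have h2 := (leftPot_bounds ha hb hx).2
      have h3 : Real.log (aInf ν - x) ≤ Real.log (aInf ν - subord β ρ x) :=
        Real.log_le_log (by linarith) (by linarith [(subord_bounds hβ hcρ hx).2])
      linarith
    · filter_upwards [Iio_mem_atBot (aInf ρ)] with x hx
      have hx : x < aInf ρ := hx
      have hlt := subord_lt hβ hcν hcρ hR hx
      have h1 := (leftPot_bounds haν hbν hlt).2
      have h2 := (leftPot_bounds ha hb hx).1
      have hab := le_of_ae haν hbν
      have h3 : Real.log (bSup ν - subord β ρ x) ≤ Real.log (bSup ν + β - x) :=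
        Real.log_le_log (by linarith) (by linarith [(subord_bounds hβ hcρ hx).1])
      linarith
  have hlim : Tendsto D atBot (nhds 0) := by
    have := hmp.add hpot
    rw [add_zero] at this
    refine this.congr fun x => ?_
    simp only [hD, Emp, subord]
    ring
  have hlim' : Tendsto D atBot (nhds (D z)) :=
    tendsto_const_nhds.congr' (by
      filter_upwards [Iio_mem_atBot (aInf ρ)] with x hx using (hconst x hx).symm)
  have := tendsto_nhds_unique hlim' hlim
  simp only [hD] at this
  linarith

/-- `G_ρ(z)` minimizes the functional: if `g = G_ρ(y)` then `G_ν(y - β / (1 + g)) = g`, so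
monotonicity of `G_ν` makes the sign of `∂E_z/∂g` that of `y - z`, i.e. of `g - G_ρ(z)`. -/
lemma Emp_min (hβ : 0 < β) (hcν : HasCompactSupp ν) (hcρ : HasCompactSupp ρ)
    (hR : ∃ ε > (0 : ℝ), ∀ u : ℝ, u ∈ Set.Ioo (-ε) ε → u ≠ 0 →
      u ∈ Dhat ρ ∧ u ∈ Dhat ν ∧ Rhat ρ u = β / (1 - u) + Rhat ν u)
    {z : ℝ} (hz : z < aInf ρ) {g : ℝ} (hg : 0 < g) (hg' : (g : EReal) < GaSup ρ)
    (hzg : z - β / (1 + g) < aInf ν) : Emp β ν z (Gst ρ z) ≤ Emp β ν z g := by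
  obtain ⟨ha, hb, -⟩ := ae_support hcρ
  obtain ⟨haν, hbν, -⟩ := ae_support hcν
  have hp := Gst_pos ha hb hz
  have hGν := (Gst_strictMonoOn haν hbν).monotoneOn
  have hGρ := Gst_strictMonoOn ha hb
  have hdown : ∀ s t : ℝ, 0 < s → s ≤ t → z - β / (1 + t) < aInf ν →
      z - β / (1 + s) < aInf ν := by
    intro s t hs hst ht
    have : β / (1 + t) ≤ β / (1 + s) := by gcongr
    linarith
  rcases le_total (Gst ρ z) g with hle | hle
  · have hdom : ∀ s ∈ Icc (Gst ρ z) g, 0 < s ∧ z - β / (1 + s) < aInf ν := fun s hs =>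
      ⟨hp.trans_le hs.1, hdown s g (hp.trans_le hs.1) hs.2 hzg⟩
    have hmono : MonotoneOn (Emp β ν z) (Icc (Gst ρ z) g) := by
      refine monotoneOn_of_deriv_nonneg (convex_Icc _ _)
        (fun s hs => (Emp_hasDerivAt hcν (hdom s hs).1 (hdom s hs).2).continuousAt.continuousWithinAt)
        (fun s hs => ?_) (fun s hs => ?_)
      · have hs := interior_subset hs
        exact (Emp_hasDerivAt hcν (hdom s hs).1
          (hdom s hs).2).differentiableAt.differentiableWithinAt
      · have hs := interior_subset hs
        rw [(Emp_hasDerivAt hcν (hdom s hs).1 (hdom s hs).2).deriv]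
        obtain ⟨y, hy, rfl⟩ := exists_Gst_eq hcρ (hdom s hs).1
          (lt_of_le_of_lt (EReal.coe_le_coe_iff.2 hs.2) hg')
        have hzy : z ≤ y := (hGρ.le_iff_le hz hy).1 hs.1
        have h1 := Gst_subord hβ hcν hcρ hR hy
        have h2 : Gst ν (z - β / (1 + Gst ρ y)) ≤ Gst ν (subord β ρ y) :=
          hGν (hdom _ hs).2 (subord_lt hβ hcν hcρ hR hy) (by unfold subord; linarith)
        exact mul_nonneg (by positivity) (by linarith)
    exact hmono ⟨le_rfl, hle⟩ ⟨hle, le_rfl⟩ hle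
  · have hdom : ∀ s ∈ Icc g (Gst ρ z), 0 < s ∧ z - β / (1 + s) < aInf ν := fun s hs =>
      ⟨hg.trans_le hs.1, hdown s _ (hg.trans_le hs.1) hs.2 (subord_lt hβ hcν hcρ hR hz)⟩
    have hanti : AntitoneOn (Emp β ν z) (Icc g (Gst ρ z)) := by
      refine antitoneOn_of_deriv_nonpos (convex_Icc _ _)
        (fun s hs => (Emp_hasDerivAt hcν (hdom s hs).1 (hdom s hs).2).continuousAt.continuousWithinAt)
        (fun s hs => ?_) (fun s hs => ?_)
      · have hs := interior_subset hs
        exact (Emp_hasDerivAt hcν (hdom s hs).1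
          (hdom s hs).2).differentiableAt.differentiableWithinAt
      · have hs := interior_subset hs
        rw [(Emp_hasDerivAt hcν (hdom s hs).1 (hdom s hs).2).deriv]
        obtain ⟨z', hzz', hz'⟩ := exists_between hz
        obtain ⟨y, hy, rfl⟩ := exists_Gst_eq hcρ (hdom s hs).1
          (lt_GaSup_iff.2 ⟨z', hz', hs.2.trans_lt (hGρ hz hz' hzz')⟩)
        have hzy : y ≤ z := (hGρ.le_iff_le hy hz).1 hs.2
        have h1 := Gst_subord hβ hcν hcρ hR hy
        have h2 : Gst ν (subord β ρ y) ≤ Gst ν (z - β / (1 + Gst ρ y)) :=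
          hGν (subord_lt hβ hcν hcρ hR hy) (hdom _ hs).2 (by unfold subord; linarith)
        exact mul_nonpos_of_nonneg_of_nonpos (by positivity) (by linarith)
    exact hanti ⟨le_rfl, hle⟩ ⟨hle, le_rfl⟩ hle

end Variational

/-- variational formula for the logarithmic potential of the free additive
convolution of the Marchenko–Pastur law (of parameter `β`) with `ν`. -/
theorem statement2 (β : ℝ) (hβ : 0 < β) (ν ρ : MeasureTheory.Measure ℝ)
    [MeasureTheory.IsProbabilityMeasure ν] [MeasureTheory.IsProbabilityMeasure ρ]
    (hcν : HasCompactSupp ν) (hcρ : HasCompactSupp ρ)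
    (hR : ∃ ε > (0 : ℝ), ∀ u : ℝ, u ∈ Set.Ioo (-ε) ε → u ≠ 0 →
      u ∈ Dhat ρ ∧ u ∈ Dhat ν ∧ Rhat ρ u = β / (1 - u) + Rhat ν u) :
    ∀ z : ℝ, z < aInf ρ →
      Upot ρ z =
        sInf ((fun g : ℝ =>
            β * Real.log (1 + g) - β * g / (1 + g) +
              ∫ l, Real.log (l - z + β / (1 + g)) ∂ν) ''
          {g : ℝ | (0 < g ∧ (g : EReal) < GaSup ρ) ∧ z - aInf ν < β / (1 + g)}) := by
  intro z hz
  obtain ⟨ha, hb, -⟩ := ae_support hcρ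
  obtain ⟨z', hzz', hz'⟩ := exists_between hz
  have hfun : ∀ g : ℝ, β * Real.log (1 + g) - β * g / (1 + g) +
      ∫ l, Real.log (l - z + β / (1 + g)) ∂ν = Emp β ν z g := by
    intro g
    simp only [Emp, leftPot, sub_sub_eq_add_sub, sub_add_eq_add_sub]
  simp only [hfun]
  rw [Upot_eq_leftPot, ← Emp_Gst hβ hcν hcρ hR hz]
  symm
  refine IsLeast.csInf_eq ⟨⟨Gst ρ z, ⟨⟨Gst_pos ha hb hz, lt_GaSup_iff.2
    ⟨z', hz', Gst_strictMonoOn ha hb hz hz' hzz'⟩⟩, ?_⟩, rfl⟩, ?_⟩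
  · have := subord_lt hβ hcν hcρ hR hz
    unfold subord at this
    linarith
  · rintro _ ⟨g, ⟨⟨hg, hg'⟩, hzg⟩, rfl⟩
    exact Emp_min hβ hcν hcρ hR hz hg hg' (by linarith)
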